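/- Let D be a finite set, σ > 0, C₁ = 8/log(1 + σ⁻²), and T ≥ 1. Let (β_t)_{1≤t≤T} be nondecreasing nonnegative reals. For each t let σ_{t−1} : D → ℝ satisfy 0 ≤ σ_{t−1}(x)² ≤ 1 for all x, and let p_t : D → ℝ be a probability mass function with p_t(x) ≤ π* for all x. Let γ_T be a real with ∑_{t=1}^T (1/2)·log(1 + σ⁻²·σ_{t−1}(x)²) ≤ γ_T for every x ∈ D. Let (r_t)_{1≤t≤T} be reals with r_t ≤ 2·β_t^{1/2}·∑_{x∈D} σ_{t−1}(x)·p_t(x) and r_t ≥ 0 for each t. Then ∑_{t=1}^T r_t² ≤ C₁·β_T·γ_T·|D|·π*. -/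

import Mathlib

/-!
Squaring the regret bound and applying Jensen's inequality to the probability vector `p t` gives
`r t ^ 2 ≤ 4 β T ∑ x, p t x * σprev t x ^ 2 ≤ 4 β T π* ∑ x, σprev t x ^ 2`. Since variances lie in
`[0, 1]`, Bernoulli's inequality (`mul_log_one_add_le`) bounds each of them by
`log (1 + σ⁻² σprev t x ^ 2) / log (1 + σ⁻²)`. Exchanging the two sums, the sum over `t` at each
fixed `x` is at most `2 γT / log (1 + σ⁻²)`, and there are `|D|` points `x`.
-/

/-- The concave function `s ↦ log (1 + a s)` lies above its chord on `[0, 1]`. -/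
theorem mul_log_one_add_le {a s : ℝ} (ha : 0 ≤ a) (hs : 0 ≤ s) (hs1 : s ≤ 1) :
    s * Real.log (1 + a) ≤ Real.log (1 + a * s) := by
  have h := rpow_one_add_le_one_add_mul_self (s := a) (by linarith) hs hs1
  have h1 : 0 < 1 + a := by linarith
  have h2 := Real.log_le_log (Real.rpow_pos_of_pos h1 s) h
  rwa [Real.log_rpow h1, mul_comm s a] at h2

/-- Sum-of-squared expected regret bound in the discrete SS-GPUCB theorem:
`∑_{t=1}^T r_t² ≤ C₁·β_T·γ_T·|D|·π*`. -/
theorem stmt_6 {D : Type*} [Fintype D] (σ : ℝ) (hσ : 0 < σ)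
    (C₁ : ℝ) (hC₁ : C₁ = 8 / Real.log (1 + σ⁻¹ ^ 2))
    (T : ℕ) (hT : 1 ≤ T) (β : ℕ → ℝ)
    (hβnn : ∀ t ∈ Finset.Icc 1 T, 0 ≤ β t)
    (hβmono : ∀ t ∈ Finset.Icc 1 T, ∀ t' ∈ Finset.Icc 1 T, t ≤ t' → β t ≤ β t')
    (σprev : ℕ → D → ℝ)
    (hσprev : ∀ t ∈ Finset.Icc 1 T, ∀ x, 0 ≤ (σprev t x) ^ 2 ∧ (σprev t x) ^ 2 ≤ 1)
    (p : ℕ → D → ℝ) (πstar : ℝ)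
    (hpnn : ∀ t ∈ Finset.Icc 1 T, ∀ x, 0 ≤ p t x)
    (hpsum : ∀ t ∈ Finset.Icc 1 T, ∑ x, p t x = 1)
    (hpbd : ∀ t ∈ Finset.Icc 1 T, ∀ x, p t x ≤ πstar)
    (γT : ℝ)
    (hγ : ∀ x, ∑ t ∈ Finset.Icc 1 T,
      (1 / 2 : ℝ) * Real.log (1 + σ⁻¹ ^ 2 * (σprev t x) ^ 2) ≤ γT)
    (r : ℕ → ℝ)
    (hrnn : ∀ t ∈ Finset.Icc 1 T, 0 ≤ r t)
    (hr : ∀ t ∈ Finset.Icc 1 T, r t ≤ 2 * Real.sqrt (β t) * ∑ x, σprev t x * p t x) :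
    ∑ t ∈ Finset.Icc 1 T, (r t) ^ 2 ≤ C₁ * β T * γT * (Fintype.card D) * πstar := by
  have hTm : T ∈ Finset.Icc 1 T := Finset.mem_Icc.2 ⟨hT, le_rfl⟩
  have ha : 0 < σ⁻¹ ^ 2 := by positivity
  have hL : 0 < Real.log (1 + σ⁻¹ ^ 2) := Real.log_pos (by linarith)
  -- `D` is nonempty because `p T` has total mass one, hence `πstar` is nonnegative.
  have hπ : 0 ≤ πstar := by
    rcases isEmpty_or_nonempty D with hD | ⟨⟨x⟩⟩
    · have h := hpsum T hTm
      simp at h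
    · exact (hpnn T hTm x).trans (hpbd T hTm x)
  have hβT := hβnn T hTm
  have hstep : ∀ t ∈ Finset.Icc 1 T,
      r t ^ 2 ≤ 4 * β T * πstar * ∑ x, σprev t x ^ 2 := by
    intro t ht
    have hjensen : (∑ x, σprev t x * p t x) ^ 2 ≤ ∑ x, p t x * σprev t x ^ 2 := by
      have h := Real.pow_arith_mean_le_arith_mean_pow_of_even Finset.univ (p t) (σprev t)
        (fun x _ => hpnn t ht x) (hpsum t ht) even_two
      simpa only [mul_comm (p t _) (σprev t _)] using h
    have hmax : ∑ x, p t x * σprev t x ^ 2 ≤ πstar * ∑ x, σprev t x ^ 2 := by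
      rw [Finset.mul_sum]
      exact Finset.sum_le_sum fun x _ =>
        mul_le_mul_of_nonneg_right (hpbd t ht x) (sq_nonneg _)
    have hβt : β t ≤ β T := hβmono t ht T hTm (Finset.mem_Icc.1 ht).2
    calc r t ^ 2 ≤ (2 * Real.sqrt (β t) * ∑ x, σprev t x * p t x) ^ 2 :=
          pow_le_pow_left₀ (hrnn t ht) (hr t ht) 2
      _ = 4 * β t * (∑ x, σprev t x * p t x) ^ 2 := by
          rw [mul_pow, mul_pow, Real.sq_sqrt (hβnn t ht)]
          norm_num
      _ ≤ 4 * β T * (πstar * ∑ x, σprev t x ^ 2) :=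
          mul_le_mul (by linarith) (hjensen.trans hmax) (sq_nonneg _) (by linarith)
      _ = 4 * β T * πstar * ∑ x, σprev t x ^ 2 := by ring
  have hvar : ∀ x, ∑ t ∈ Finset.Icc 1 T, σprev t x ^ 2
      ≤ 2 * γT / Real.log (1 + σ⁻¹ ^ 2) := by
    intro x
    rw [le_div_iff₀ hL, Finset.sum_mul]
    have h := hγ x
    rw [← Finset.mul_sum] at h
    have h2 : ∑ t ∈ Finset.Icc 1 T, σprev t x ^ 2 * Real.log (1 + σ⁻¹ ^ 2)
        ≤ ∑ t ∈ Finset.Icc 1 T, Real.log (1 + σ⁻¹ ^ 2 * σprev t x ^ 2) :=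
      Finset.sum_le_sum fun t ht =>
        mul_log_one_add_le ha.le (hσprev t ht x).1 (hσprev t ht x).2
    linarith
  calc ∑ t ∈ Finset.Icc 1 T, r t ^ 2
      ≤ ∑ t ∈ Finset.Icc 1 T, 4 * β T * πstar * ∑ x, σprev t x ^ 2 := Finset.sum_le_sum hstep
    _ = 4 * β T * πstar * ∑ x, ∑ t ∈ Finset.Icc 1 T, σprev t x ^ 2 := by
        rw [← Finset.mul_sum, Finset.sum_comm]
    _ ≤ 4 * β T * πstar * ∑ _x : D, 2 * γT / Real.log (1 + σ⁻¹ ^ 2) :=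
        mul_le_mul_of_nonneg_left (Finset.sum_le_sum fun x _ => hvar x) (by positivity)
    _ = C₁ * β T * γT * (Fintype.card D) * πstar := by
        rw [hC₁, Finset.sum_const, Finset.card_univ, nsmul_eq_mul]
        ring
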